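/- Let R be a commutative ring with identity and M a finitely generated R-module. Then M is a zero-dimensional coprimely structured module if and only if M is a strongly 0-dimensional module. -/

import Mathlib

universe v

/-- A submodule `P` of an `R`-module `M` is prime if `P ≠ M` and whenever `r • m ∈ P`,
either `m ∈ P` or `r • M ⊆ P`. -/
def IsPrimeSubmodule {R M : Type*} [CommRing R] [AddCommGroup M] [Module R M]
    (P : Submodule R M) : Prop :=
  P ≠ ⊤ ∧ ∀ (r : R) (m : M), r • m ∈ P → m ∈ P ∨ ∀ x : M, r • x ∈ P

/-- The defining condition for a (prime) submodule `P` to be coprimely structured: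
for every family `{N_i}` of submodules with `N_i + P = M` for all `i`,
the intersection `⋂ N_i` is not contained in `P`. -/
def CoprimelyStructuredAt {R M : Type*} [CommRing R] [AddCommGroup M] [Module R M]
    (P : Submodule R M) : Prop :=
  ∀ (ι : Type*) (N : ι → Submodule R M), (∀ i, N i ⊔ P = ⊤) → ¬ (⨅ i, N i) ≤ P

/-- `M` is a coprimely structured `R`-module if every prime submodule is coprimely
structured. -/
def CoprimelyStructured (R M : Type*) [CommRing R] [AddCommGroup M] [Module R M] : Prop :=
  ∀ P : Submodule R M, IsPrimeSubmodule P → CoprimelyStructuredAt.{_, _, v} P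

/-- The defining condition for a (prime) submodule `P` to be strongly prime: for every
family `{N_i}` of submodules with `⋂ N_i ⊆ P`, some `N_j ⊆ P`. -/
def StronglyPrimeAt {R M : Type*} [CommRing R] [AddCommGroup M] [Module R M]
    (P : Submodule R M) : Prop :=
  ∀ (ι : Type*) (N : ι → Submodule R M), (⨅ i, N i) ≤ P → ∃ j, N j ≤ P

/-- `M` is strongly 0-dimensional if every prime submodule is strongly prime. -/
def StronglyZeroDimensional (R M : Type*) [CommRing R] [AddCommGroup M] [Module R M] : Prop :=
  ∀ P : Submodule R M, IsPrimeSubmodule P → StronglyPrimeAt.{_, _, v} P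

/-- `M` is zero-dimensional if every prime submodule of `M` is a maximal submodule. -/
def ZeroDimensionalModule (R M : Type*) [CommRing R] [AddCommGroup M] [Module R M] : Prop :=
  ∀ P : Submodule R M, IsPrimeSubmodule P → IsCoatom P

/-- `M` is a multiplication `R`-module if every submodule is of the form `I • M` for
some ideal `I` of `R`. -/
def IsMultiplicationModule (R M : Type*) [CommRing R] [AddCommGroup M] [Module R M] : Prop :=
  ∀ N : Submodule R M, ∃ I : Ideal R, N = I • (⊤ : Submodule R M)

/-- The radical of a submodule `N`: the intersection of all prime submodules containing
`N` (equal to `M` if there are none). -/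
def submoduleRad {R M : Type*} [CommRing R] [AddCommGroup M] [Module R M]
    (N : Submodule R M) : Submodule R M :=
  sInf {P | IsPrimeSubmodule P ∧ N ≤ P}

/-- A family `{N_i}` of submodules of a multiplication module satisfies property (*) if
for each `x ∈ M` there is `n ∈ ℕ` such that `x ∈ rad (N_i)` implies `x ^ n ⊆ N_i`,
where `x ^ n` denotes `I ^ n • M` for an ideal `I` with `R x = I • M`. -/
def SatisfiesStar {R M ι : Type*} [CommRing R] [AddCommGroup M] [Module R M]
    (N : ι → Submodule R M) : Prop :=
  ∀ x : M, ∃ n : ℕ, ∀ i, x ∈ submoduleRad (N i) →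
    ∀ I : Ideal R, Submodule.span R {x} = I • (⊤ : Submodule R M) →
      I ^ n • (⊤ : Submodule R M) ≤ N i

/-- A proper submodule `Q` of `M` is primary if `r • m ∈ Q` and `m ∉ Q` imply
`r ∈ √(Q : M)`. -/
def IsPrimarySubmodule {R M : Type*} [CommRing R] [AddCommGroup M] [Module R M]
    (Q : Submodule R M) : Prop :=
  Q ≠ ⊤ ∧ ∀ (r : R) (m : M), r • m ∈ Q → m ∉ Q → r ∈ (Q.colon ⊤).radical

/-- The submodule `a M`. -/
def imgSub {R : Type*} (M : Type*) [CommRing R] [AddCommGroup M] [Module R M] (a : R) :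
    Submodule R M := LinearMap.range (LinearMap.lsmul R M a)

theorem mem_imgSub {R M : Type*} [CommRing R] [AddCommGroup M] [Module R M] (a : R) (x : M) :
    x ∈ imgSub M a ↔ ∃ y, a • y = x := by
  simp [imgSub]

theorem imgSub_le {R M : Type*} [CommRing R] [AddCommGroup M] [Module R M] (a : R)
    (N : Submodule R M) : imgSub M a ≤ N ↔ ∀ x, a • x ∈ N := by
  constructor
  · intro h x
    exact h ((mem_imgSub a _).2 ⟨x, rfl⟩)
  · rintro h x hx
    obtain ⟨y, rfl⟩ := (mem_imgSub a _).1 hx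
    exact h y

theorem imgSub_fg {R M : Type*} [CommRing R] [AddCommGroup M] [Module R M] [Module.Finite R M]
    (a : R) : (imgSub M a).FG := by
  unfold imgSub
  rw [LinearMap.range_eq_map]
  exact Submodule.FG.map _ Module.Finite.fg_top

theorem nak_aux {R M : Type*} [CommRing R] [AddCommGroup M] [Module R M] [Module.Finite R M]
    (I : Ideal R) (N : Submodule R M) (h : N ⊔ I • (⊤ : Submodule R M) = ⊤) :
    ∃ r : R, r - 1 ∈ I ∧ ∀ x : M, r • x ∈ N := by
  have h1 : (⊤ : Submodule R (M ⧸ N)) ≤ I • ⊤ := by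
    have := congrArg (Submodule.map N.mkQ) h
    rw [Submodule.map_sup, Submodule.map_smul'', Submodule.map_top, Submodule.range_mkQ,
      Submodule.mkQ_map_self, bot_sup_eq] at this
    exact this.ge
  obtain ⟨r, hr, hr2⟩ := Submodule.exists_sub_one_mem_and_smul_eq_zero_of_fg_of_le_smul I
    (⊤ : Submodule R (M ⧸ N)) Module.Finite.fg_top h1
  refine ⟨r, hr, fun x => ?_⟩
  have := hr2 (N.mkQ x) trivial
  rw [← map_smul, Submodule.mkQ_apply, Submodule.Quotient.mk_eq_zero] at this
  exact this

/-- Inverses modulo the colon. -/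
theorem inv_aux {R M : Type*} [CommRing R] [AddCommGroup M] [Module R M] [Module.Finite R M]
    (P : Submodule R M) (s : R) (h : P ⊔ imgSub M s = ⊤) :
    ∃ t : R, ∀ x : M, x - t • s • x ∈ P := by
  have hle : imgSub M s ≤ Ideal.span {s} • (⊤ : Submodule R M) := by
    rw [imgSub_le]
    intro x
    exact Submodule.smul_mem_smul (Ideal.mem_span_singleton_self s) trivial
  obtain ⟨r, hr, hr2⟩ := nak_aux (Ideal.span {s}) P
    (top_le_iff.1 (h ▸ sup_le_sup_left hle P))
  obtain ⟨t, ht⟩ := Ideal.mem_span_singleton'.1 hr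
  refine ⟨-t, fun x => ?_⟩
  have : x - (-t) • s • x = r • x := by
    rw [smul_smul, ← sub_eq_zero]
    have : r = 1 + t * s := by rw [ht]; ring
    rw [this]; module
  rw [this]; exact hr2 x

theorem exists_prime_aux {R M : Type*} [CommRing R] [AddCommGroup M] [Module R M]
    [Module.Finite R M] (a : ℕ → R) (b : ℕ → R) (hab : ∀ n, a (n + 1) = a n ^ 2 * b n)
    (N : Submodule R M) (hN : ∀ n, ¬ imgSub M (a n) ≤ N) :
    ∃ Q, N ≤ Q ∧ IsPrimeSubmodule Q ∧ ∀ n, ¬ imgSub M (a n) ≤ Q := by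
  have hdvd : ∀ m n, m ≤ n → a m ∣ a n := by
    intro m n h
    induction n, h using Nat.le_induction with
    | base => exact dvd_rfl
    | succ n _ ih => rw [hab]; exact ih.trans ⟨a n * b n, by ring⟩
  have hanti : ∀ m n, m ≤ n → imgSub M (a n) ≤ imgSub M (a m) := by
    intro m n h
    obtain ⟨c, hc⟩ := hdvd m n h
    rw [imgSub_le]
    intro x
    rw [mem_imgSub, hc]
    exact ⟨c • x, by rw [smul_smul]⟩
  obtain ⟨Q, hNQ, hQ⟩ := zorn_le_nonempty₀ {Q : Submodule R M | ∀ n, ¬ imgSub M (a n) ≤ Q}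
    (by
      intro c hc hchain y hy
      refine ⟨sSup c, ?_, fun z hz => le_sSup hz⟩
      intro n hn
      have hcomp := (Submodule.fg_iff_compact (imgSub M (a n))).1 (imgSub_fg (a n))
      rw [CompleteLattice.isCompactElement_iff_le_of_directed_sSup_le] at hcomp
      obtain ⟨z, hz, hz2⟩ := hcomp c ⟨y, hy⟩ hchain.directedOn hn
      exact hc hz n hz2) N hN
  refine ⟨Q, hNQ, ⟨?_, ?_⟩, hQ.1⟩
  · rintro rfl
    exact hQ.1 0 le_top
  · intro r x hrx
    by_contra hcon
    push Not at hcon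
    obtain ⟨hx, y, hy⟩ := hcon
    have key : ∀ L : Submodule R M, Q ≤ L → ¬ L ≤ Q → ∃ n, imgSub M (a n) ≤ L := by
      intro L h1 h2
      by_contra hc
      push Not at hc
      exact h2 (hQ.2 hc h1)
    obtain ⟨n, hn⟩ := key (Q ⊔ Submodule.span R {x}) le_sup_left (fun h =>
      hx (h (Submodule.mem_sup_right (Submodule.mem_span_singleton_self x))))
    obtain ⟨m, hm⟩ := key (Q ⊔ imgSub M r) le_sup_left (fun h =>
      hy (h (Submodule.mem_sup_right ((mem_imgSub r _).2 ⟨y, rfl⟩))))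
    set k := max n m
    have hn' := (hanti n k (le_max_left _ _)).trans hn
    have hm' := (hanti m k (le_max_right _ _)).trans hm
    apply hQ.1 (k + 1)
    rw [imgSub_le] at hn' hm' ⊢
    intro z
    obtain ⟨q, hq, w, hw, hqw⟩ := Submodule.mem_sup.1 (hm' z)
    obtain ⟨w, rfl⟩ := (mem_imgSub r _).1 hw
    obtain ⟨q2, hq2, v, hv, hqv⟩ := Submodule.mem_sup.1 (hn' w)
    obtain ⟨c, rfl⟩ := Submodule.mem_span_singleton.1 hv
    have : a (k + 1) • z = b k • (a k • q + (r • q2 + c • (r • x))) := by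
      have e1 : a (k + 1) • z = b k • a k • a k • z := by
        rw [hab]; module
      rw [e1, ← hqw, smul_add (a k), smul_comm (a k) r w, ← hqv]
      module
    rw [this]
    exact Q.smul_mem _ (Q.add_mem (Q.smul_mem _ hq)
      (Q.add_mem (Q.smul_mem _ hq2) (Q.smul_mem _ hrx)))

universe w w'

theorem stab_aux {R M : Type*} [CommRing R] [AddCommGroup M] [Module R M]
    [Module.Finite R M] (hS : StronglyZeroDimensional.{w, _, _} R M)
    (a : ℕ → R) (b : ℕ → R) (hab : ∀ n, a (n + 1) = a n ^ 2 * b n) :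
    ∃ n, imgSub M (a n) ≤ imgSub M (a (n + 1)) := by
  by_contra hcon
  push Not at hcon
  obtain ⟨Q, hNQ, hQ, hQ2⟩ := exists_prime_aux a b hab (⨅ i : ULift.{w} ℕ, imgSub M (a i.down))
    (fun n h => hcon n (h.trans (iInf_le (fun i : ULift.{w} ℕ => imgSub M (a i.down)) ⟨n + 1⟩)))
  obtain ⟨j, hj⟩ := hS Q hQ _ _ hNQ
  exact hQ2 _ hj

theorem zeroDim_aux {R M : Type*} [CommRing R] [AddCommGroup M] [Module R M]
    [Module.Finite R M] (hS : StronglyZeroDimensional.{w, _, _} R M) : ZeroDimensionalModule R M := by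
  intro P hP
  -- elements outside the colon are invertible modulo it
  have hinv : ∀ s : R, (¬ ∀ x : M, s • x ∈ P) → ∃ t : R, ∀ x : M, x - t • s • x ∈ P := by
    intro s hs
    apply inv_aux
    obtain ⟨n, hn⟩ := stab_aux hS (fun n => s ^ (2 ^ n)) (fun _ => 1)
      (fun n => by rw [mul_one, ← pow_mul, pow_succ])
    have hcancel : ∀ (k : ℕ) (x : M), s ^ k • x ∈ P → x ∈ P := by
      intro k
      induction k with
      | zero => intro x hx; simpa using hx
      | succ k ih =>
        intro x hx
        rw [pow_succ, mul_smul] at hx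
        exact (hP.2 s x (ih _ hx)).resolve_right hs
    rw [eq_top_iff]
    intro x _
    obtain ⟨y, hy⟩ := (mem_imgSub _ _).1 ((imgSub_le _ _).1 hn x)
    have hpos : 1 ≤ 2 ^ n := Nat.one_le_two_pow
    have h2 : s ^ 2 ^ (n + 1) • y = s ^ 2 ^ n • s • (s ^ (2 ^ n - 1) • y) := by
      rw [smul_smul, smul_smul, ← pow_succ, ← pow_add]
      congr 2
      rw [pow_succ]; omega
    have h3 : x - s • (s ^ (2 ^ n - 1) • y) ∈ P := by
      apply hcancel (2 ^ n)
      rw [smul_sub, ← h2, hy, sub_self]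
      exact P.zero_mem
    rw [← sub_add_cancel x (s • (s ^ (2 ^ n - 1) • y))]
    exact Submodule.add_mem_sup h3 ((mem_imgSub _ _).2 ⟨_, rfl⟩)
  refine ⟨hP.1, fun L hL => ?_⟩
  obtain ⟨hPL, x, hxL, hxP⟩ := SetLike.lt_iff_le_and_exists.1 hL
  by_contra hne
  obtain ⟨y, hy⟩ : ∃ y, y ∉ L := by
    by_contra! h
    exact hne (eq_top_iff.2 fun z _ => h z)
  obtain ⟨j, hj⟩ := hS P hP (ULift.{w} Bool)
    (fun i => if i.down then L else P ⊔ Submodule.span R {y}) (by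
      intro z hz
      rw [Submodule.mem_iInf] at hz
      have h1 : z ∈ L := by simpa using hz ⟨true⟩
      have h2 : z ∈ P ⊔ Submodule.span R {y} := by simpa using hz ⟨false⟩
      obtain ⟨q, hq, v, hv, rfl⟩ := Submodule.mem_sup.1 h2
      obtain ⟨c, rfl⟩ := Submodule.mem_span_singleton.1 hv
      have hc : c • y ∈ L := by
        have := L.sub_mem h1 (hPL hq)
        simpa using this
      by_cases hcs : ∀ x : M, c • x ∈ P
      · exact P.add_mem hq (hcs y)
      · obtain ⟨t, ht⟩ := hinv c hcs
        exact absurd (by simpa using L.add_mem (hPL (ht y)) (L.smul_mem t hc)) hy)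
  obtain ⟨j⟩ := j
  cases j
  · exact hy (hPL (hj (by
      simpa using Submodule.mem_sup_right (Submodule.mem_span_singleton_self y))))
  · exact hxP (hj (by simpa using hxL))

theorem strong_transfer {R M : Type*} [CommRing R] [AddCommGroup M] [Module R M]
    [Module.Finite R M] (hS : StronglyZeroDimensional.{w, _, _} R M) :
    StronglyZeroDimensional.{w', _, _} R M := by
  have hZ := zeroDim_aux hS
  intro P hP ι N hNP
  have hPc := hZ P hP
  let p : Ideal R := 
    { carrier := {r | ∀ x : M, r • x ∈ P}
      add_mem' := fun {r s} hr hs x => by rw [add_smul]; exact P.add_mem (hr x) (hs x)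
      zero_mem' := fun x => by simp
      smul_mem' := fun c r hr x => by
        rw [smul_eq_mul, mul_smul]; exact P.smul_mem _ (hr x) }
  have hp : ∀ r, r ∈ p ↔ ∀ x : M, r • x ∈ P := fun r => Iff.rfl
  have hone : (1 : R) ∉ p := fun h => hP.1 (eq_top_iff.2 fun z _ => by simpa using h z)
  have hmul : ∀ r s, r ∉ p → s ∉ p → r * s ∉ p := by
    intro r s hr hs h
    rw [hp] at hs
    push Not at hs
    obtain ⟨x, hx⟩ := hs
    have := h x
    rw [mul_smul] at this
    exact hr ((hP.2 r _ this).resolve_left hx)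
  have hpP : p • (⊤ : Submodule R M) ≤ P := by
    rw [Submodule.smul_le]
    exact fun r hr x _ => hr x
  have hinv : ∀ s, s ∉ p → ∃ t, 1 - t * s ∈ p := by
    intro s hs
    obtain ⟨t, ht⟩ := inv_aux P s (hPc.2 _ (left_lt_sup.2 (fun h => hs ((imgSub_le _ _).1 h))))
    refine ⟨t, fun x => ?_⟩
    rw [sub_smul, one_smul, mul_smul]
    exact ht x
  have hprime : IsPrimeSubmodule (p • (⊤ : Submodule R M)) := by
    refine ⟨fun h => hP.1 (top_le_iff.1 (h ▸ hpP)), fun r m hrm => ?_⟩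
    by_cases hr : r ∈ p
    · exact Or.inr fun x => Submodule.smul_mem_smul hr trivial
    · left
      obtain ⟨t, ht⟩ := hinv r hr
      have e : m = (1 - t * r) • m + t • r • m := by module
      rw [e]
      exact Submodule.add_mem _ (Submodule.smul_mem_smul ht trivial)
        (Submodule.smul_mem _ _ hrm)
  have hPeq : p • (⊤ : Submodule R M) = P := by
    by_contra hne
    exact hP.1 ((hZ _ hprime).2 P (lt_of_le_of_ne hpP hne))
  -- a smallest `a M`
  have hmin : ∃ a, a ∉ p ∧ ∀ b, b ∉ p → imgSub M a ≤ imgSub M b := by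
    by_contra! hcon
    choose! f hf1 hf2 using hcon
    let g : ℕ → R := fun n => Nat.rec 1 (fun _ r => r ^ 2 * f r) n
    have hg : ∀ n, g (n + 1) = g n ^ 2 * f (g n) := fun n => rfl
    have hgp : ∀ n, g n ∉ p := by
      intro n
      induction n with
      | zero => exact hone
      | succ n ih =>
        rw [hg, sq]
        exact hmul _ _ (hmul _ _ ih ih) (hf1 _ ih)
    obtain ⟨n, hn⟩ := stab_aux hS g (fun n => f (g n)) hg
    refine hf2 _ (hgp n) (hn.trans ?_)
    rw [imgSub_le]
    intro x
    rw [mem_imgSub, hg]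
    exact ⟨g n ^ 2 • x, by rw [smul_smul, mul_comm]⟩
  obtain ⟨a, ha, hamin⟩ := hmin
  by_contra! hcon
  apply ha
  rw [hp, ← imgSub_le]
  refine le_trans (le_iInf fun i => ?_) hNP
  have htop : N i ⊔ p • (⊤ : Submodule R M) = ⊤ := by
    rw [hPeq]
    exact hPc.2 _ (right_lt_sup.2 (hcon i))
  obtain ⟨r, hr, hr2⟩ := nak_aux p (N i) htop
  refine (hamin r fun h => hone ?_).trans ((imgSub_le _ _).2 hr2)
  have := p.sub_mem h hr
  simpa using this

/-- A finitely generated module is zero-dimensional and coprimely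
structured iff it is strongly 0-dimensional. -/
theorem zeroDim_coprimelyStructured_iff_stronglyZeroDimensional {R M : Type*} [CommRing R]
    [AddCommGroup M] [Module R M] [Module.Finite R M] :
    (ZeroDimensionalModule R M ∧ CoprimelyStructured R M) ↔
      StronglyZeroDimensional R M := by
  constructor
  · rintro ⟨hZ, hC⟩
    refine strong_transfer (fun P hP ι N hN => ?_)
    by_contra! hcon
    exact hC P hP ι N (fun i => (hZ P hP).2 _ (right_lt_sup.2 (hcon i))) hN
  · intro hS
    refine ⟨zeroDim_aux hS, fun P hP ι N hN hle => ?_⟩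
    obtain ⟨j, hj⟩ := strong_transfer hS P hP ι N hle
    exact hP.1 (by rw [← hN j, sup_eq_right.2 hj])
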